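/- Every left ideal H of R = K⟨x,y⟩/(xy−1) is of the form H = Σ ⊕ Rp(x) (internal direct sum of left R-submodules) where p(x) ∈ K[x] is a polynomial in x (possibly zero) and Σ is a semisimple submodule contained in the socle I = ⟨1−yx⟩ of R. -/

import Mathlib

noncomputable section

/-- The defining relation of the Toeplitz/Jacobson algebra: `x * y = 1`. -/
inductive ToeplitzRel (K : Type*) [Field K] :
    FreeAlgebra K (Fin 2) → FreeAlgebra K (Fin 2) → Prop
  | rel : ToeplitzRel K (FreeAlgebra.ι K 0 * FreeAlgebra.ι K 1) 1

/-- The Toeplitz/Jacobson algebra `R = K⟨x,y⟩/(xy-1)`. -/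
abbrev Toeplitz (K : Type*) [Field K] := RingQuot (ToeplitzRel K)

variable (K : Type*) [Field K]

/-- The image of the generator `x` in `R`. -/
def tx : Toeplitz K := RingQuot.mkAlgHom K (ToeplitzRel K) (FreeAlgebra.ι K 0)

/-- The image of the generator `y` in `R`. -/
def ty : Toeplitz K := RingQuot.mkAlgHom K (ToeplitzRel K) (FreeAlgebra.ι K 1)

/-- `f n = y^(n-1) x^(n-1) - y^n x^n`. -/
def tf (n : ℕ) : Toeplitz K := ty K ^ (n-1) * tx K ^ (n-1) - ty K ^ n * tx K ^ n

theorem txy : tx K * ty K = 1 := by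
  have h := RingQuot.mkAlgHom_rel K (ToeplitzRel.rel (K := K))
  simpa [tx, ty] using h

theorem t_ind {P : Toeplitz K → Prop} (hc : ∀ c, P (algebraMap K _ c)) (hx : P (tx K))
    (hy : P (ty K)) (hm : ∀ a b, P a → P b → P (a * b)) (ha : ∀ a b, P a → P b → P (a + b))
    (r : Toeplitz K) : P r := by
  obtain ⟨a, rfl⟩ := RingQuot.mkAlgHom_surjective K (ToeplitzRel K) r
  induction a using FreeAlgebra.induction with
  | grade0 c => rw [AlgHom.commutes]; exact hc c
  | grade1 i =>
    fin_cases i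
    · exact hx
    · exact hy
  | mul a b h1 h2 => rw [map_mul]; exact hm _ _ h1 h2
  | add a b h1 h2 => rw [map_add]; exact ha _ _ h1 h2

def te (j : ℕ) : Toeplitz K := (1 - ty K * tx K) * tx K ^ j

theorem tx_te (j : ℕ) : tx K * te K j = 0 := by
  have : tx K * (1 - ty K * tx K) = 0 := by
    rw [mul_sub, ← mul_assoc, txy]; simp
  rw [te, ← mul_assoc, this, zero_mul]

theorem tx_pow_ty_pow (n : ℕ) : tx K ^ n * ty K ^ n = 1 := by
  induction n with
  | zero => simp
  | succ n ih =>
    rw [pow_succ, pow_succ', mul_assoc, ← mul_assoc (tx K) (ty K), txy, one_mul, ih]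

theorem tx_mul_aeval (j : ℕ) (g : Polynomial K) :
    tx K * (Polynomial.aeval (ty K) g * te K j) = Polynomial.aeval (ty K) g.divX * te K j := by
  conv_lhs => rw [← Polynomial.X_mul_divX_add g]
  rw [map_add, map_mul, Polynomial.aeval_X, Polynomial.aeval_C, add_mul, mul_add,
    Algebra.left_comm, tx_te, mul_zero, add_zero, mul_assoc, ← mul_assoc (tx K), txy, one_mul]

theorem te_form (j : ℕ) (r : Toeplitz K) : ∀ g : Polynomial K, ∃ g' : Polynomial K,
    r * (Polynomial.aeval (ty K) g * te K j) = Polynomial.aeval (ty K) g' * te K j := by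
  induction r using t_ind with
  | hc c =>
    intro g
    exact ⟨Polynomial.C c * g, by rw [map_mul, Polynomial.aeval_C, mul_assoc]⟩
  | hx => intro g; exact ⟨_, tx_mul_aeval K j g⟩
  | hy =>
    intro g
    exact ⟨Polynomial.X * g, by rw [map_mul, Polynomial.aeval_X, mul_assoc]⟩
  | hm a b h1 h2 =>
    intro g
    obtain ⟨g1, e1⟩ := h2 g
    obtain ⟨g2, e2⟩ := h1 g1
    exact ⟨g2, by rw [mul_assoc, e1, e2]⟩
  | ha a b h1 h2 =>
    intro g
    obtain ⟨g1, e1⟩ := h2 g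
    obtain ⟨g2, e2⟩ := h1 g
    exact ⟨g2 + g1, by rw [add_mul, e1, e2, map_add, add_mul]⟩

theorem te_mem (j n : ℕ) : ∀ g : Polynomial K, g.natDegree ≤ n → g ≠ 0 →
    te K j ∈ Submodule.span (Toeplitz K) {Polynomial.aeval (ty K) g * te K j} := by
  induction n with
  | zero =>
    intro g hg h0
    obtain ⟨c, rfl⟩ := Polynomial.natDegree_eq_zero.1 (Nat.le_zero.1 hg)
    have hc : c ≠ 0 := by rintro rfl; simp at h0
    refine Submodule.mem_span_singleton.2 ⟨algebraMap K _ c⁻¹, ?_⟩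
    rw [smul_eq_mul, Polynomial.aeval_C, ← mul_assoc, ← map_mul, inv_mul_cancel₀ hc, map_one,
      one_mul]
  | succ n ih =>
    intro g hg h0
    by_cases hd : g.natDegree = 0
    · obtain ⟨c, rfl⟩ := Polynomial.natDegree_eq_zero.1 hd
      exact ih _ (by simp) h0
    · have h1 : g.divX ≠ 0 := by
        intro h
        rw [Polynomial.divX_eq_zero_iff] at h
        apply hd
        rw [h, Polynomial.natDegree_C]
      have h2 := ih g.divX (by rw [Polynomial.natDegree_divX_eq_natDegree_tsub_one]; omega) h1
      refine (Submodule.span_singleton_le_iff_mem _ _).2 ?_ h2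
      rw [← tx_mul_aeval]
      exact Submodule.smul_mem _ _ (Submodule.mem_span_singleton_self _)

theorem te_ss (j : ℕ) : IsSemisimpleModule (Toeplitz K)
    (Submodule.span (Toeplitz K) {te K j}) := by
  by_cases h : te K j = 0
  · rw [h, Submodule.span_zero_singleton]
    exact (isSemisimpleModule_iff _ _).mpr Subsingleton.instComplementedLattice
  · have : IsSimpleModule (Toeplitz K) (Submodule.span (Toeplitz K) {te K j}) := by
      rw [isSimpleModule_iff_isAtom]
      refine ⟨by simpa using h, fun N hN => ?_⟩
      by_contra hne
      obtain ⟨m, hm, hm0⟩ := (Submodule.ne_bot_iff _).1 hne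
      obtain ⟨r, rfl⟩ := Submodule.mem_span_singleton.1 (hN.le hm)
      obtain ⟨g, hg⟩ := te_form K j r 1
      rw [map_one, one_mul] at hg
      rw [smul_eq_mul, hg] at hm hm0
      have := te_mem K j _ g le_rfl (by rintro rfl; simp at hm0)
      refine hN.not_ge ((Submodule.span_singleton_le_iff_mem _ _).2 ?_)
      exact (Submodule.span_singleton_le_iff_mem _ _).2 hm this
    infer_instance

def tJ : Submodule (Toeplitz K) (Toeplitz K) := ⨆ j, Submodule.span (Toeplitz K) {te K j}

theorem tJ_ss : IsSemisimpleModule (Toeplitz K) (tJ K) := by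
  have := te_ss K
  rw [tJ, ← iSup_univ]
  exact isSemisimpleModule_biSup_of_isSemisimpleModule_submodule fun i _ => this i

theorem te_mem_tJ (j : ℕ) : te K j ∈ tJ K :=
  Submodule.mem_iSup_of_mem j (Submodule.mem_span_singleton_self _)

theorem tJ_right_of (r : Toeplitz K) (h : ∀ j, te K j * r ∈ tJ K) (m : Toeplitz K)
    (hm : m ∈ tJ K) : m * r ∈ tJ K := by
  have : tJ K ≤ (tJ K).comap (LinearMap.toSpanSingleton (Toeplitz K) (Toeplitz K) r) := by
    refine iSup_le fun j => (Submodule.span_singleton_le_iff_mem _ _).2 ?_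
    simpa using h j
  simpa using this hm

theorem tJ_right (r : Toeplitz K) : ∀ m ∈ tJ K, m * r ∈ tJ K := by
  induction r using t_ind with
  | hc c =>
    intro m hm
    rw [← Algebra.commutes]
    exact Submodule.smul_mem _ _ hm
  | hx =>
    refine tJ_right_of K _ fun j => ?_
    have := te_mem_tJ K (j + 1)
    rwa [te, pow_succ, ← mul_assoc] at this
  | hy =>
    refine tJ_right_of K _ fun j => ?_
    cases j with
    | zero =>
      have : te K 0 * ty K = 0 := by
        rw [te, pow_zero, mul_one, sub_mul, mul_assoc, txy]; simp
      rw [this]; exact zero_mem _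
    | succ j =>
      rw [te, pow_succ, mul_assoc, mul_assoc, txy, mul_one]
      exact te_mem_tJ K j
  | hm a b h1 h2 => intro m hm; rw [← mul_assoc]; exact h2 _ (h1 _ hm)
  | ha a b h1 h2 => intro m hm; rw [mul_add]; exact add_mem (h1 _ hm) (h2 _ hm)

abbrev tI : Submodule (Toeplitz K) (Toeplitz K) :=
  TwoSidedIdeal.asIdeal (TwoSidedIdeal.span {1 - ty K * tx K})

theorem tI_le : tI K ≤ tJ K := by
  intro m hm
  rw [TwoSidedIdeal.mem_asIdeal] at hm
  have h : TwoSidedIdeal.span {1 - ty K * tx K} ≤ TwoSidedIdeal.mk' (tJ K : Set (Toeplitz K))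
      (zero_mem _) (fun h1 h2 => add_mem h1 h2) (fun h => neg_mem h)
      (fun {a b} h => Submodule.smul_mem _ a h) (fun {a b} h => tJ_right K b a h) := by
    rw [TwoSidedIdeal.span_le]
    intro a ha
    rw [Set.mem_singleton_iff] at ha
    subst ha
    simpa [te] using te_mem_tJ K 0
  simpa using h hm

theorem tI_pow (n : ℕ) (r : Toeplitz K) : r - ty K ^ n * (tx K ^ n * r) ∈ tI K := by
  induction n generalizing r with
  | zero => simp
  | succ n ih =>
    have h1 : r - ty K * (tx K * r) ∈ tI K := by
      rw [TwoSidedIdeal.mem_asIdeal]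
      have := TwoSidedIdeal.mul_mem_right _ _ r
        (TwoSidedIdeal.subset_span (Set.mem_singleton (1 - ty K * tx K)))
      rwa [sub_mul, one_mul, mul_assoc] at this
    have h2 := Submodule.smul_mem _ (ty K) (ih (tx K * r))
    have h3 := add_mem h1 h2
    rw [smul_eq_mul, mul_sub] at h3
    convert h3 using 1
    rw [pow_succ', pow_succ]
    simp only [mul_assoc]
    abel

theorem t_poly (r : Toeplitz K) : ∃ (n : ℕ) (p : Polynomial K),
    tx K ^ n * r = Polynomial.aeval (tx K) p := by
  induction r using t_ind with
  | hc c => exact ⟨0, Polynomial.C c, by simp⟩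
  | hx => exact ⟨0, Polynomial.X, by simp⟩
  | hy => exact ⟨1, 1, by simp [txy]⟩
  | hm a b h1 h2 =>
    obtain ⟨n, p, hp⟩ := h1
    obtain ⟨m, q, hq⟩ := h2
    refine ⟨m + n, p * q, ?_⟩
    have hc : tx K ^ m * Polynomial.aeval (tx K) p = Polynomial.aeval (tx K) p * tx K ^ m := by
      rw [← Polynomial.aeval_X_pow (R := K) (tx K), ← map_mul, ← map_mul, mul_comm]
    rw [pow_add, mul_assoc, ← mul_assoc (tx K ^ n), hp, ← mul_assoc, hc, mul_assoc, hq, map_mul]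
  | ha a b h1 h2 =>
    obtain ⟨n, p, hp⟩ := h1
    obtain ⟨m, q, hq⟩ := h2
    refine ⟨m + n, Polynomial.X ^ m * p + Polynomial.X ^ n * q, ?_⟩
    rw [map_add, map_mul, map_mul, ← hp, ← hq]
    simp only [map_pow, Polynomial.aeval_X, mul_add, ← mul_assoc, ← pow_add, add_comm n m]

def tA (H : Submodule (Toeplitz K) (Toeplitz K)) : Ideal (Polynomial K) where
  carrier := {p | Polynomial.aeval (tx K) p ∈ H}
  zero_mem' := by simp
  add_mem' := by
    intro a b ha hb
    simp only [Set.mem_ofPred_eq, map_add] at *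
    exact add_mem ha hb
  smul_mem' := by
    intro c a ha
    simp only [Set.mem_ofPred_eq, smul_eq_mul, map_mul] at *
    exact Submodule.smul_mem _ _ ha


theorem t_gen {R M : Type*} [Ring R] [AddCommGroup M] [Module R M] (H I J Q : Submodule R M)
    (hIJ : I ≤ J) (hJ : IsSemisimpleModule R J) (hQH : Q ≤ H) (hH : H ≤ (H ⊓ I) ⊔ Q) :
    ∃ S : Submodule R M, S ≤ I ∧ IsSemisimpleModule R S ∧ Disjoint S Q ∧ S ⊔ Q = H := by
  have hle : H ⊓ I ≤ J := inf_le_right.trans hIJ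
  have hss : IsSemisimpleModule R (H ⊓ I : Submodule R M) :=
    IsSemisimpleModule.of_injective
      (Submodule.inclusion hle) (Submodule.inclusion_injective hle)
  set N := H ⊓ I with hN
  obtain ⟨C, hC⟩ := exists_isCompl (Q.comap N.subtype)
  have hCM : C.map N.subtype ≤ N := Submodule.map_subtype_le _ _
  refine ⟨C.map N.subtype, hCM.trans inf_le_right, ?_, ?_, le_antisymm ?_ ?_⟩
  · exact IsSemisimpleModule.of_injective
      (Submodule.inclusion hCM) (Submodule.inclusion_injective _)
  · rw [Submodule.disjoint_def]
    rintro _ ⟨c, hc, rfl⟩ hcQ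
    have := (Submodule.disjoint_def.1 hC.disjoint) c hcQ hc
    rw [this, map_zero]
  · exact sup_le (hCM.trans inf_le_left) hQH
  · refine hH.trans (sup_le ?_ le_sup_right)
    intro m hm
    have : (⟨m, hm⟩ : N) ∈ Q.comap N.subtype ⊔ C := by rw [hC.sup_eq_top]; trivial
    obtain ⟨a, ha, c, hc, hac⟩ := Submodule.mem_sup.1 this
    have hmm : m = (c : M) + a := by
      have := congrArg Subtype.val hac
      rw [add_comm]; exact this.symm
    rw [hmm]
    exact Submodule.add_mem_sup ⟨c, hc, rfl⟩ ha

/-- Every left ideal `H` of `R = K⟨x,y⟩/(xy-1)` is of the form `H = Σ ⊕ Rp(x)`, an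
internal direct sum where `p(x)` is a polynomial in `x` (possibly zero) and `Σ` is a
semisimple submodule contained in the socle `I = ⟨1-yx⟩`. -/
theorem toeplitz_left_ideal_structure (H : Submodule (Toeplitz K) (Toeplitz K)) :
    ∃ (p : Polynomial K) (S : Submodule (Toeplitz K) (Toeplitz K)),
      S ≤ TwoSidedIdeal.asIdeal (TwoSidedIdeal.span {1 - ty K * tx K}) ∧
      IsSemisimpleModule (Toeplitz K) S ∧
      Disjoint S (Submodule.span (Toeplitz K) {Polynomial.aeval (tx K) p}) ∧
      S ⊔ Submodule.span (Toeplitz K) {Polynomial.aeval (tx K) p} = H := by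
  obtain ⟨q, hq⟩ := (IsPrincipalIdealRing.principal (tA K H)).principal
  have hqH : Polynomial.aeval (tx K) q ∈ H := by
    have : q ∈ tA K H := by rw [hq]; exact Submodule.mem_span_singleton_self _
    exact this
  set Q := Submodule.span (Toeplitz K) {Polynomial.aeval (tx K) q} with hQ
  have hQH : Q ≤ H := (Submodule.span_singleton_le_iff_mem _ _).2 hqH
  have hHle : H ≤ (H ⊓ tI K) ⊔ Q := by
    intro h hh
    obtain ⟨n, a, ha⟩ := t_poly K h
    have haA : a ∈ tA K H := by
      change Polynomial.aeval (tx K) a ∈ H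
      rw [← ha]; exact Submodule.smul_mem _ _ hh
    rw [hq] at haA
    obtain ⟨b, rfl⟩ := Submodule.mem_span_singleton.1 haA
    have h1 : ty K ^ n * (tx K ^ n * h) ∈ Q := by
      rw [ha, smul_eq_mul, map_mul]
      exact Submodule.smul_mem _ _ (Submodule.smul_mem _ _ (Submodule.mem_span_singleton_self _))
    have h2 := tI_pow K n h
    refine Submodule.mem_sup.2 ⟨_, ⟨sub_mem hh (hQH h1), h2⟩, _, h1, by abel⟩
  obtain ⟨S, h1, h2, h3, h4⟩ := t_gen H (tI K) (tJ K) Q (tI_le K) (tJ_ss K) hQH hHle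
  exact ⟨q, S, h1, h2, h3, h4⟩
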